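/- For every full rLTL formula φ over a nonempty finite set 𝒫 of atomic propositions there exists a generalized Büchi automaton A over the alphabet Σ = 2^𝒫 (without a designated initial state) together with a family of states (q_b)_{b ∈ B₄} such that: (i) the number of states of A is at most 5^{|cl(φ)|} + 4; (ii) A has at most 4·|cl(φ)| acceptance sets; and (iii) for every b ∈ B₄ and every infinite word σ ∈ Σ^ω, A has an accepting run on σ starting in q_b if and only if V(σ,φ) = b. -/

import Mathlib

/-- Truth values as 4-tuples of Booleans. -/
abbrev TV := Bool × Bool × Bool × Bool

def ttop : TV := (true, true, true, true)
def tbot : TV := (false, false, false, false)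

/-- Componentwise order on 4-tuples. -/
def tle (a b : TV) : Prop :=
  a.1 ≤ b.1 ∧ a.2.1 ≤ b.2.1 ∧ a.2.2.1 ≤ b.2.2.1 ∧ a.2.2.2 ≤ b.2.2.2

instance : DecidableRel tle := fun a b =>
  decidable_of_iff (a.1 ≤ b.1 ∧ a.2.1 ≤ b.2.1 ∧ a.2.2.1 ≤ b.2.2.1 ∧ a.2.2.2 ≤ b.2.2.2) Iff.rfl

def tmeet (a b : TV) : TV :=
  (a.1 && b.1, a.2.1 && b.2.1, a.2.2.1 && b.2.2.1, a.2.2.2 && b.2.2.2)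

def tjoin (a b : TV) : TV :=
  (a.1 || b.1, a.2.1 || b.2.1, a.2.2.1 || b.2.2.1, a.2.2.2 || b.2.2.2)

/-- da Costa negation. -/
def tneg (a : TV) : TV := if a = ttop then tbot else ttop

/-- Residual implication. -/
def timp (a b : TV) : TV := if tle a b then ttop else b

/-- Infimum of a Boolean sequence. -/
noncomputable def bInf (f : ℕ → Bool) : Bool :=
  @decide (∀ i, f i = true) (Classical.propDecidable _)

/-- Supremum of a Boolean sequence. -/
noncomputable def bSup (f : ℕ → Bool) : Bool :=
  @decide (∃ i, f i = true) (Classical.propDecidable _)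

/-- Bounded infimum over `i < n`. -/
noncomputable def bInfLt (n : ℕ) (f : ℕ → Bool) : Bool :=
  @decide (∀ i, i < n → f i = true) (Classical.propDecidable _)

/-- Bounded supremum over `i < n`. -/
noncomputable def bSupLt (n : ℕ) (f : ℕ → Bool) : Bool :=
  @decide (∃ i, i < n ∧ f i = true) (Classical.propDecidable _)

/-- Suffix of an infinite word. -/
def suffix {P : Type} (σ : ℕ → Set P) (i : ℕ) : ℕ → Set P := fun j => σ (i + j)


/-- Full rLTL formulas. -/
inductive RFormula (P : Type) : Type where
  | atom : P → RFormula P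
  | not : RFormula P → RFormula P
  | and : RFormula P → RFormula P → RFormula P
  | or : RFormula P → RFormula P → RFormula P
  | imp : RFormula P → RFormula P → RFormula P
  | next : RFormula P → RFormula P
  | always : RFormula P → RFormula P
  | eventually : RFormula P → RFormula P
  | release : RFormula P → RFormula P → RFormula P
  | until : RFormula P → RFormula P → RFormula P
  deriving DecidableEq

open scoped Classical in
/-- The 5-valued semantics of full rLTL. -/
noncomputable def rV {P : Type} : RFormula P → (ℕ → Set P) → TV
  | .atom p, σ => if p ∈ σ 0 then ttop else tbot
  | .not φ, σ => tneg (rV φ σ)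
  | .and φ ψ, σ => tmeet (rV φ σ) (rV ψ σ)
  | .or φ ψ, σ => tjoin (rV φ σ) (rV ψ σ)
  | .imp φ ψ, σ => timp (rV φ σ) (rV ψ σ)
  | .next φ, σ => rV φ (suffix σ 1)
  | .always φ, σ =>
      (bInf fun i => (rV φ (suffix σ i)).1,
       bSup fun j => bInf fun i => (rV φ (suffix σ (j + i))).2.1,
       bInf fun j => bSup fun i => (rV φ (suffix σ (j + i))).2.2.1,
       bSup fun i => (rV φ (suffix σ i)).2.2.2)
  | .eventually φ, σ =>
      (bSup fun i => (rV φ (suffix σ i)).1,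
       bSup fun i => (rV φ (suffix σ i)).2.1,
       bSup fun i => (rV φ (suffix σ i)).2.2.1,
       bSup fun i => (rV φ (suffix σ i)).2.2.2)
  | .release φ ψ, σ =>
      (bInf fun j => ((rV ψ (suffix σ j)).1 || bSupLt j fun i => (rV φ (suffix σ i)).1),
       bSup fun k => bInf fun j =>
         ((rV ψ (suffix σ (k + j))).2.1 || bSupLt (k + j) fun i => (rV φ (suffix σ i)).2.1),
       bInf fun k => bSup fun j =>
         ((rV ψ (suffix σ (k + j))).2.2.1 || bSupLt (k + j) fun i => (rV φ (suffix σ i)).2.2.1),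
       bSup fun j => ((rV ψ (suffix σ j)).2.2.2 || bSupLt j fun i => (rV φ (suffix σ i)).2.2.2))
  | .until φ ψ, σ =>
      (bSup fun j => ((rV ψ (suffix σ j)).1 && bInfLt j fun i => (rV φ (suffix σ i)).1),
       bSup fun j => ((rV ψ (suffix σ j)).2.1 && bInfLt j fun i => (rV φ (suffix σ i)).2.1),
       bSup fun j => ((rV ψ (suffix σ j)).2.2.1 && bInfLt j fun i => (rV φ (suffix σ i)).2.2.1),
       bSup fun j => ((rV ψ (suffix σ j)).2.2.2 && bInfLt j fun i => (rV φ (suffix σ i)).2.2.2))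

/-- Projection onto the k-th component. -/
def comp : Fin 4 → TV → Bool
  | 0, a => a.1
  | 1, a => a.2.1
  | 2, a => a.2.2.1
  | 3, a => a.2.2.2

/-- The closure (set of subformulas) of a full rLTL formula. -/
def cl {P : Type} [DecidableEq P] : RFormula P → Finset (RFormula P)
  | .atom p => {.atom p}
  | .not φ => insert (.not φ) (cl φ)
  | .and φ ψ => insert (.and φ ψ) (cl φ ∪ cl ψ)
  | .or φ ψ => insert (.or φ ψ) (cl φ ∪ cl ψ)
  | .imp φ ψ => insert (.imp φ ψ) (cl φ ∪ cl ψ)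
  | .next φ => insert (.next φ) (cl φ)
  | .always φ => insert (.always φ) (cl φ)
  | .eventually φ => insert (.eventually φ) (cl φ)
  | .release φ ψ => insert (.release φ ψ) (cl φ ∪ cl ψ)
  | .until φ ψ => insert (.until φ ψ) (cl φ ∪ cl ψ)

/-- A generalized Büchi automaton (without designated initial state) over alphabet `S`
with state space `Q`: a transition relation and a finite set of acceptance sets. -/
structure GBA (S : Type) (Q : Type) where
  Δ : Q → S → Q → Prop
  Acc : Finset (Set Q)

/-- `A` has an accepting run on `σ` starting in state `q`: there is a run starting in `q`,
following the transition relation, that visits every acceptance set infinitely often. -/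
def AcceptsFrom {S Q : Type} (A : GBA S Q) (q : Q) (σ : ℕ → S) : Prop :=
  ∃ ρ : ℕ → Q, ρ 0 = q ∧ (∀ i, A.Δ (ρ i) (σ i) (ρ (i + 1)))
    ∧ ∀ F ∈ A.Acc, ∀ i : ℕ, ∃ j, i ≤ j ∧ ρ j ∈ F

/-- The 4-tuples belonging to B₄ (monotone tuples). -/
def TVMono (a : TV) : Prop := a.1 ≤ a.2.1 ∧ a.2.1 ≤ a.2.2.1 ∧ a.2.2.1 ≤ a.2.2.2

/-! ### Temporal operators on sequences of propositions -/

/-- At position `i`, `y` holds until and including the point where `x` releases it. -/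
def SeqRel (x y : ℕ → Prop) (i : ℕ) : Prop := ∀ j, i ≤ j → y j ∨ ∃ l, i ≤ l ∧ l < j ∧ x l

/-- The second component of the robust release operator. -/
def SeqRelEv (x y : ℕ → Prop) (i : ℕ) : Prop :=
  (∃ l, i ≤ l ∧ x l) ∨ ∃ k, i ≤ k ∧ ∀ j, k ≤ j → y j

/-- The third component of the robust release operator. -/
def SeqRelInf (x y : ℕ → Prop) (i : ℕ) : Prop :=
  (∃ l, i ≤ l ∧ x l) ∨ ∀ k, i ≤ k → ∃ j, k ≤ j ∧ y j

/-- The fourth component of the robust release operator. -/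
def SeqRelEx (x y : ℕ → Prop) (i : ℕ) : Prop := ∃ j, i ≤ j ∧ (y j ∨ x j)

/-- At position `i`, `x` holds until `y` does. -/
def SeqUntil (x y : ℕ → Prop) (i : ℕ) : Prop := ∃ j, i ≤ j ∧ y j ∧ ∀ l, i ≤ l → l < j → x l

theorem seqRel_step (x y : ℕ → Prop) (i : ℕ) :
    SeqRel x y i ↔ y i ∧ (x i ∨ SeqRel x y (i + 1)) := by
  constructor
  · intro h
    refine ⟨?_, ?_⟩
    · rcases h i le_rfl with h | ⟨l, h1, h2, -⟩
      · exact h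
      · omega
    · by_cases hx : x i
      · exact Or.inl hx
      · refine Or.inr fun j hj => ?_
        rcases h j (by omega) with h | ⟨l, h1, h2, h3⟩
        · exact Or.inl h
        · rcases Nat.eq_or_lt_of_le h1 with rfl | h1
          · exact absurd h3 hx
          · exact Or.inr ⟨l, h1, h2, h3⟩
  · rintro ⟨hy, h⟩ j hj
    rcases Nat.eq_or_lt_of_le hj with rfl | hj
    · exact Or.inl hy
    · rcases h with h | h
      · exact Or.inr ⟨i, le_rfl, hj, h⟩
      · rcases h j hj with h | ⟨l, h1, h2, h3⟩
        · exact Or.inl h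
        · exact Or.inr ⟨l, by omega, h2, h3⟩

theorem seqRelEv_step (x y : ℕ → Prop) (i : ℕ) :
    SeqRelEv x y i ↔ x i ∨ SeqRelEv x y (i + 1) := by
  constructor
  · rintro (⟨l, h1, h2⟩ | ⟨k, h1, h2⟩)
    · rcases Nat.eq_or_lt_of_le h1 with rfl | h1
      · exact Or.inl h2
      · exact Or.inr (Or.inl ⟨l, h1, h2⟩)
    · exact Or.inr (Or.inr ⟨k + 1, by omega, fun j hj => h2 j (by omega)⟩)
  · rintro (h | ⟨l, h1, h2⟩ | ⟨k, h1, h2⟩)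
    · exact Or.inl ⟨i, le_rfl, h⟩
    · exact Or.inl ⟨l, by omega, h2⟩
    · exact Or.inr ⟨k, by omega, h2⟩

theorem seqRelInf_step (x y : ℕ → Prop) (i : ℕ) :
    SeqRelInf x y i ↔ x i ∨ SeqRelInf x y (i + 1) := by
  constructor
  · rintro (⟨l, h1, h2⟩ | h)
    · rcases Nat.eq_or_lt_of_le h1 with rfl | h1
      · exact Or.inl h2
      · exact Or.inr (Or.inl ⟨l, h1, h2⟩)
    · exact Or.inr (Or.inr fun k hk => h k (by omega))
  · rintro (h | ⟨l, h1, h2⟩ | h)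
    · exact Or.inl ⟨i, le_rfl, h⟩
    · exact Or.inl ⟨l, by omega, h2⟩
    · refine Or.inr fun k hk => ?_
      obtain ⟨j, h1, h2⟩ := h (k + 1) (by omega)
      exact ⟨j, by omega, h2⟩

theorem seqRelEx_step (x y : ℕ → Prop) (i : ℕ) :
    SeqRelEx x y i ↔ y i ∨ x i ∨ SeqRelEx x y (i + 1) := by
  constructor
  · rintro ⟨j, h1, h2⟩
    rcases Nat.eq_or_lt_of_le h1 with rfl | h1
    · tauto
    · exact Or.inr (Or.inr ⟨j, h1, h2⟩)
  · rintro (h | h | ⟨j, h1, h2⟩)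
    · exact ⟨i, le_rfl, Or.inl h⟩
    · exact ⟨i, le_rfl, Or.inr h⟩
    · exact ⟨j, by omega, h2⟩

theorem seqUntil_step (x y : ℕ → Prop) (i : ℕ) :
    SeqUntil x y i ↔ y i ∨ (x i ∧ SeqUntil x y (i + 1)) := by
  constructor
  · rintro ⟨j, h1, h2, h3⟩
    rcases Nat.eq_or_lt_of_le h1 with rfl | h1
    · exact Or.inl h2
    · exact Or.inr ⟨h3 i le_rfl h1, j, h1, h2, fun l hl => h3 l (by omega)⟩
  · rintro (h | ⟨h, j, h1, h2, h3⟩)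
    · exact ⟨i, le_rfl, h, fun l _ _ => by omega⟩
    · refine ⟨j, by omega, h2, fun l hl hlj => ?_⟩
      rcases Nat.eq_or_lt_of_le hl with rfl | hl
      · exact h
      · exact h3 l hl hlj

theorem seqRel_fair (x y : ℕ → Prop) (i : ℕ) : ∃ j, i ≤ j ∧ (SeqRel x y j ∨ ¬ y j) := by
  by_contra! h
  exact (h i le_rfl).1 fun j hj => Or.inl (h j hj).2

theorem seqRelEv_fair (x y : ℕ → Prop) (i : ℕ) :
    ∃ j, i ≤ j ∧ ((¬ SeqRelEv x y j ∧ ¬ y j) ∨ (SeqRelEv x y j ∧ (x j ∨ SeqRel x y j))) := by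
  by_cases h : SeqRelEv x y i
  · rcases h with ⟨l, h1, h2⟩ | ⟨k, h1, h2⟩
    · exact ⟨l, h1, Or.inr ⟨Or.inl ⟨l, le_rfl, h2⟩, Or.inl h2⟩⟩
    · exact ⟨k, h1, Or.inr ⟨Or.inr ⟨k, le_rfl, h2⟩, Or.inr fun j hj => Or.inl (h2 j hj)⟩⟩
  · simp only [SeqRelEv, not_or, not_exists, not_and, not_forall] at h
    obtain ⟨j, h1, h2⟩ := h.2 i le_rfl
    refine ⟨j, h1, Or.inl ⟨?_, h2⟩⟩
    rintro (⟨l, h3, h4⟩ | ⟨k, h3, h4⟩)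
    · exact h.1 l (by omega) h4
    · obtain ⟨m, h5, h6⟩ := h.2 k (by omega)
      exact h6 (h4 m h5)

theorem seqRelInf_fair (x y : ℕ → Prop) (i : ℕ) :
    ∃ j, i ≤ j ∧
      ((SeqRelInf x y j ∧ (x j ∨ y j)) ∨ (¬ SeqRelInf x y j ∧ ¬ SeqRelEx x y j)) := by
  by_cases h : SeqRelInf x y i
  · rcases h with ⟨l, h1, h2⟩ | h
    · exact ⟨l, h1, Or.inl ⟨Or.inl ⟨l, le_rfl, h2⟩, Or.inl h2⟩⟩
    · obtain ⟨j, h1, h2⟩ := h i le_rfl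
      exact ⟨j, h1, Or.inl ⟨Or.inr fun k hk => h k (by omega), Or.inr h2⟩⟩
  · simp only [SeqRelInf, not_or, not_exists, not_and, not_forall] at h
    obtain ⟨hx, k, hk, hy⟩ := h
    refine ⟨k, hk, Or.inr ⟨?_, ?_⟩⟩
    · rintro (⟨l, h3, h4⟩ | h3)
      · exact hx l (by omega) h4
      · obtain ⟨j, h5, h6⟩ := h3 k le_rfl
        exact hy j h5 h6
    · rintro ⟨j, h3, h4 | h4⟩
      · exact hy j h3 h4
      · exact hx j (by omega) h4

theorem seqRelEx_fair (x y : ℕ → Prop) (i : ℕ) :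
    ∃ j, i ≤ j ∧ (¬ SeqRelEx x y j ∨ x j ∨ y j) := by
  by_cases h : SeqRelEx x y i
  · obtain ⟨j, h1, h2⟩ := h
    exact ⟨j, h1, by tauto⟩
  · exact ⟨i, le_rfl, Or.inl h⟩

theorem seqUntil_fair (x y : ℕ → Prop) (i : ℕ) : ∃ j, i ≤ j ∧ (¬ SeqUntil x y j ∨ y j) := by
  by_cases h : SeqUntil x y i
  · obtain ⟨j, h1, h2, -⟩ := h
    exact ⟨j, h1, Or.inr h2⟩
  · exact ⟨i, le_rfl, Or.inl h⟩

theorem seqRel_unique {x y r : ℕ → Prop} (hr : ∀ i, r i ↔ y i ∧ (x i ∨ r (i + 1)))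
    (hf : ∀ i, ∃ j, i ≤ j ∧ (r j ∨ ¬ y j)) (i : ℕ) : r i ↔ SeqRel x y i := by
  constructor
  · intro h j hj
    by_contra! hc
    have key : ∀ d, i + d ≤ j → r (i + d) := by
      intro d
      induction d with
      | zero => exact fun _ => h
      | succ d ih =>
        intro hd
        exact ((hr (i + d)).1 (ih (by omega))).2.resolve_left (hc.2 _ (by omega) (by omega))
    have hrj := key (j - i) (by omega)
    rw [Nat.add_sub_cancel' hj] at hrj
    exact hc.1 ((hr j).1 hrj).1
  · intro h
    by_contra hc
    have key : ∀ d, ¬ r (i + d) ∧ SeqRel x y (i + d) := by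
      intro d
      induction d with
      | zero => exact ⟨hc, h⟩
      | succ d ih =>
        have h1 := (seqRel_step x y (i + d)).1 ih.2
        have h2 := hr (i + d)
        rw [← Nat.add_assoc]
        tauto
    obtain ⟨j, hj, h1⟩ := hf i
    have h2 := key (j - i)
    rw [Nat.add_sub_cancel' hj] at h2
    exact h1.elim h2.1 (not_not.2 ((seqRel_step x y j).1 h2.2).1)

theorem of_forall_step {p : ℕ → Prop} {i : ℕ} (h0 : p i) (hs : ∀ j, i ≤ j → p j → p (j + 1))
    {j : ℕ} (hj : i ≤ j) : p j :=
  Nat.le_induction h0 hs j hj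

theorem seqRelEv_unique {x y r g : ℕ → Prop} (hr : ∀ i, r i ↔ x i ∨ r (i + 1))
    (hg : ∀ i, g i → y i ∧ (x i ∨ g (i + 1)))
    (hf : ∀ i, ∃ j, i ≤ j ∧ ((¬ r j ∧ ¬ y j) ∨ (r j ∧ (x j ∨ g j)))) (i : ℕ) :
    r i ↔ SeqRelEv x y i := by
  by_cases hx : ∃ l, i ≤ l ∧ x l
  · refine iff_of_true ?_ (Or.inl hx)
    obtain ⟨l, h1, h2⟩ := hx
    by_contra hc
    have := of_forall_step (p := fun j => ¬ r j) hc
      (fun j _ h h' => h ((hr j).2 (Or.inr h'))) h1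
    exact this ((hr l).2 (Or.inl h2))
  · push Not at hx
    constructor
    · intro h
      have hall : ∀ j, i ≤ j → r j := fun j hj => of_forall_step h
        (fun j hj h => ((hr j).1 h).resolve_left (hx j hj)) hj
      obtain ⟨k, hk, h1⟩ := hf i
      have hgk : g k := by
        have := hall k hk
        have := hx k hk
        tauto
      refine Or.inr ⟨k, hk, fun j hj => (hg j ?_).1⟩
      exact of_forall_step hgk
        (fun j hj h => (hg j h).2.resolve_left (hx j (by omega))) hj
    · rintro (⟨l, h1, h2⟩ | ⟨k, h1, h2⟩)
      · exact absurd h2 (hx l h1)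
      · by_contra hc
        have hall : ∀ j, i ≤ j → ¬ r j := fun j hj => of_forall_step (p := fun j => ¬ r j) hc
          (fun j _ h h' => h ((hr j).2 (Or.inr h'))) hj
        obtain ⟨j, hj, h3⟩ := hf k
        have := hall j (by omega)
        have := h2 j hj
        tauto

theorem seqRelInf_unique {x y r d : ℕ → Prop} (hr : ∀ i, r i ↔ x i ∨ r (i + 1))
    (hd : ∀ i, d i ↔ y i ∨ x i ∨ d (i + 1))
    (hf : ∀ i, ∃ j, i ≤ j ∧ ((r j ∧ (x j ∨ y j)) ∨ (¬ r j ∧ ¬ d j))) (i : ℕ) :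
    r i ↔ SeqRelInf x y i := by
  by_cases hx : ∃ l, i ≤ l ∧ x l
  · refine iff_of_true ?_ (Or.inl hx)
    obtain ⟨l, h1, h2⟩ := hx
    by_contra hc
    have := of_forall_step (p := fun j => ¬ r j) hc
      (fun j _ h h' => h ((hr j).2 (Or.inr h'))) h1
    exact this ((hr l).2 (Or.inl h2))
  · push Not at hx
    constructor
    · intro h
      have hall : ∀ j, i ≤ j → r j := fun j hj => of_forall_step h
        (fun j hj h => ((hr j).1 h).resolve_left (hx j hj)) hj
      refine Or.inr fun k hk => ?_
      obtain ⟨j, hj, h1⟩ := hf k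
      have := hall j (by omega)
      have := hx j (by omega)
      exact ⟨j, hj, by tauto⟩
    · rintro (⟨l, h1, h2⟩ | h)
      · exact absurd h2 (hx l h1)
      · by_contra hc
        have hall : ∀ j, i ≤ j → ¬ r j := fun j hj => of_forall_step (p := fun j => ¬ r j) hc
          (fun j _ h h' => h ((hr j).2 (Or.inr h'))) hj
        obtain ⟨k, hk, h1⟩ := hf i
        have hdk : ¬ d k := by
          have := hall k hk
          tauto
        obtain ⟨j, hj, h2⟩ := h k hk
        have := of_forall_step (p := fun j => ¬ d j) hdk
          (fun j _ h h' => h ((hd j).2 (Or.inr (Or.inr h')))) hj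
        exact this ((hd j).2 (Or.inl h2))

theorem seqUntil_unique {x y r : ℕ → Prop} (hr : ∀ i, r i ↔ y i ∨ (x i ∧ r (i + 1)))
    (hf : ∀ i, ∃ j, i ≤ j ∧ (¬ r j ∨ y j)) (i : ℕ) : r i ↔ SeqUntil x y i := by
  have key := seqRel_unique (x := fun j => ¬ x j) (y := fun j => ¬ y j) (r := fun j => ¬ r j)
    (fun i => by have := hr i; tauto)
    (fun i => by
      obtain ⟨j, hj, h⟩ := hf i
      exact ⟨j, hj, by tauto⟩) i
  rw [← not_iff_not, key]
  simp only [SeqRel, SeqUntil, not_exists, not_and, not_forall, exists_prop]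
  refine forall_congr' fun j => forall_congr' fun _ => ?_
  tauto

theorem seqRelEx_unique {x y r : ℕ → Prop} (hr : ∀ i, r i ↔ y i ∨ x i ∨ r (i + 1))
    (hf : ∀ i, ∃ j, i ≤ j ∧ (¬ r j ∨ x j ∨ y j)) (i : ℕ) : r i ↔ SeqRelEx x y i := by
  have key := seqUntil_unique (x := fun _ => True) (y := fun j => y j ∨ x j) (r := r)
    (fun i => by have := hr i; tauto)
    (fun i => by
      obtain ⟨j, hj, h⟩ := hf i
      exact ⟨j, hj, by tauto⟩) i
  rw [key]
  simp [SeqUntil, SeqRelEx]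

/-! ### Temporal operators on words -/

theorem bInf_eq_true {f : ℕ → Bool} : bInf f = true ↔ ∀ i, f i = true := by
  simp [bInf]

theorem bSup_eq_true {f : ℕ → Bool} : bSup f = true ↔ ∃ i, f i = true := by
  simp [bSup]

theorem bInfLt_eq_true {n : ℕ} {f : ℕ → Bool} :
    bInfLt n f = true ↔ ∀ i, i < n → f i = true := by
  simp [bInfLt]

theorem bSupLt_eq_true {n : ℕ} {f : ℕ → Bool} :
    bSupLt n f = true ↔ ∃ i, i < n ∧ f i = true := by
  simp [bSupLt]

theorem suffix_suffix {P : Type} (σ : ℕ → Set P) (i j : ℕ) :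
    suffix (suffix σ i) j = suffix σ (i + j) := by
  funext k
  simp [suffix, Nat.add_assoc]

theorem suffix_zero {P : Type} (σ : ℕ → Set P) : suffix σ 0 = σ := by
  funext k
  simp [suffix]

section Words

variable {P : Type}

noncomputable def wRel (x y : (ℕ → Set P) → Bool) (σ : ℕ → Set P) : Bool :=
  bInf fun j => y (suffix σ j) || bSupLt j fun i => x (suffix σ i)

noncomputable def wRelEv (x y : (ℕ → Set P) → Bool) (σ : ℕ → Set P) : Bool :=
  bSup fun k => bInf fun j => y (suffix σ (k + j)) || bSupLt (k + j) fun i => x (suffix σ i)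

noncomputable def wRelInf (x y : (ℕ → Set P) → Bool) (σ : ℕ → Set P) : Bool :=
  bInf fun k => bSup fun j => y (suffix σ (k + j)) || bSupLt (k + j) fun i => x (suffix σ i)

noncomputable def wRelEx (x y : (ℕ → Set P) → Bool) (σ : ℕ → Set P) : Bool :=
  bSup fun j => y (suffix σ j) || bSupLt j fun i => x (suffix σ i)

noncomputable def wUntil (x y : (ℕ → Set P) → Bool) (σ : ℕ → Set P) : Bool :=
  bSup fun j => y (suffix σ j) && bInfLt j fun i => x (suffix σ i)

theorem wRel_iff (x y : (ℕ → Set P) → Bool) (σ : ℕ → Set P) (i : ℕ) :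
    wRel x y (suffix σ i) = true ↔
      SeqRel (fun n => x (suffix σ n) = true) (fun n => y (suffix σ n) = true) i := by
  simp only [wRel, bInf_eq_true, bSupLt_eq_true, suffix_suffix, Bool.or_eq_true, SeqRel]
  constructor
  · intro h j hj
    obtain ⟨d, rfl⟩ := Nat.exists_eq_add_of_le hj
    rcases h d with h | ⟨l, h1, h2⟩
    · exact Or.inl h
    · exact Or.inr ⟨i + l, by omega, by omega, h2⟩
  · intro h j
    rcases h (i + j) (by omega) with h | ⟨l, h1, h2, h3⟩
    · exact Or.inl h
    · obtain ⟨d, rfl⟩ := Nat.exists_eq_add_of_le h1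
      exact Or.inr ⟨d, by omega, h3⟩

theorem wRelEv_iff (x y : (ℕ → Set P) → Bool) (σ : ℕ → Set P) (i : ℕ) :
    wRelEv x y (suffix σ i) = true ↔
      SeqRelEv (fun n => x (suffix σ n) = true) (fun n => y (suffix σ n) = true) i := by
  simp only [wRelEv, bInf_eq_true, bSup_eq_true, bSupLt_eq_true, suffix_suffix, Bool.or_eq_true,
    SeqRelEv]
  constructor
  · rintro ⟨k, h⟩
    by_cases hx : ∃ l, i ≤ l ∧ x (suffix σ l) = true
    · exact Or.inl hx
    · refine Or.inr ⟨i + k, by omega, fun j hj => ?_⟩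
      obtain ⟨d, rfl⟩ := Nat.exists_eq_add_of_le hj
      rcases h d with h | ⟨l, h1, h2⟩
      · rwa [← Nat.add_assoc] at h
      · exact absurd ⟨i + l, by omega, h2⟩ hx
  · rintro (⟨l, h1, h2⟩ | ⟨k, h1, h2⟩)
    · obtain ⟨d, rfl⟩ := Nat.exists_eq_add_of_le h1
      exact ⟨d + 1, fun j => Or.inr ⟨d, by omega, h2⟩⟩
    · obtain ⟨d, rfl⟩ := Nat.exists_eq_add_of_le h1
      exact ⟨d, fun j => Or.inl (h2 _ (by omega))⟩

theorem wRelInf_iff (x y : (ℕ → Set P) → Bool) (σ : ℕ → Set P) (i : ℕ) :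
    wRelInf x y (suffix σ i) = true ↔
      SeqRelInf (fun n => x (suffix σ n) = true) (fun n => y (suffix σ n) = true) i := by
  simp only [wRelInf, bInf_eq_true, bSup_eq_true, bSupLt_eq_true, suffix_suffix, Bool.or_eq_true,
    SeqRelInf]
  constructor
  · intro h
    by_cases hx : ∃ l, i ≤ l ∧ x (suffix σ l) = true
    · exact Or.inl hx
    · refine Or.inr fun k hk => ?_
      obtain ⟨d, rfl⟩ := Nat.exists_eq_add_of_le hk
      obtain ⟨j, h | ⟨l, h1, h2⟩⟩ := h d
      · exact ⟨i + (d + j), by omega, h⟩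
      · exact absurd ⟨i + l, by omega, h2⟩ hx
  · rintro (⟨l, h1, h2⟩ | h) k
    · obtain ⟨d, rfl⟩ := Nat.exists_eq_add_of_le h1
      exact ⟨d + 1, Or.inr ⟨d, by omega, h2⟩⟩
    · obtain ⟨j, h1, h2⟩ := h (i + k) (by omega)
      obtain ⟨d, rfl⟩ := Nat.exists_eq_add_of_le h1
      exact ⟨d, Or.inl (by rwa [← Nat.add_assoc])⟩

theorem wRelEx_iff (x y : (ℕ → Set P) → Bool) (σ : ℕ → Set P) (i : ℕ) :
    wRelEx x y (suffix σ i) = true ↔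
      SeqRelEx (fun n => x (suffix σ n) = true) (fun n => y (suffix σ n) = true) i := by
  simp only [wRelEx, bSup_eq_true, bSupLt_eq_true, suffix_suffix, Bool.or_eq_true, SeqRelEx]
  constructor
  · rintro ⟨j, h | ⟨l, -, h2⟩⟩
    · exact ⟨i + j, by omega, Or.inl h⟩
    · exact ⟨i + l, by omega, Or.inr h2⟩
  · rintro ⟨j, h1, h2⟩
    obtain ⟨d, rfl⟩ := Nat.exists_eq_add_of_le h1
    rcases h2 with h2 | h2
    · exact ⟨d, Or.inl h2⟩
    · exact ⟨d + 1, Or.inr ⟨d, by omega, h2⟩⟩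

theorem wUntil_iff (x y : (ℕ → Set P) → Bool) (σ : ℕ → Set P) (i : ℕ) :
    wUntil x y (suffix σ i) = true ↔
      SeqUntil (fun n => x (suffix σ n) = true) (fun n => y (suffix σ n) = true) i := by
  simp only [wUntil, bSup_eq_true, bInfLt_eq_true, suffix_suffix, Bool.and_eq_true, SeqUntil]
  constructor
  · rintro ⟨j, h1, h2⟩
    refine ⟨i + j, by omega, h1, fun l hl hlj => ?_⟩
    obtain ⟨d, rfl⟩ := Nat.exists_eq_add_of_le hl
    exact h2 d (by omega)
  · rintro ⟨j, h1, h2, h3⟩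
    obtain ⟨d, rfl⟩ := Nat.exists_eq_add_of_le h1
    exact ⟨d, h2, fun l hl => h3 _ (by omega) (by omega)⟩

theorem wRel_step (x y : (ℕ → Set P) → Bool) (σ : ℕ → Set P) :
    wRel x y σ = true ↔ y σ = true ∧ (x σ = true ∨ wRel x y (suffix σ 1) = true) := by
  have h := seqRel_step (fun n => x (suffix σ n) = true) (fun n => y (suffix σ n) = true) 0
  rwa [← wRel_iff, ← wRel_iff, suffix_zero] at h

theorem wRelEv_step (x y : (ℕ → Set P) → Bool) (σ : ℕ → Set P) :
    wRelEv x y σ = true ↔ x σ = true ∨ wRelEv x y (suffix σ 1) = true := by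
  have h := seqRelEv_step (fun n => x (suffix σ n) = true) (fun n => y (suffix σ n) = true) 0
  rwa [← wRelEv_iff, ← wRelEv_iff, suffix_zero] at h

theorem wRelInf_step (x y : (ℕ → Set P) → Bool) (σ : ℕ → Set P) :
    wRelInf x y σ = true ↔ x σ = true ∨ wRelInf x y (suffix σ 1) = true := by
  have h := seqRelInf_step (fun n => x (suffix σ n) = true) (fun n => y (suffix σ n) = true) 0
  rwa [← wRelInf_iff, ← wRelInf_iff, suffix_zero] at h

theorem wRelEx_step (x y : (ℕ → Set P) → Bool) (σ : ℕ → Set P) :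
    wRelEx x y σ = true ↔ y σ = true ∨ x σ = true ∨ wRelEx x y (suffix σ 1) = true := by
  have h := seqRelEx_step (fun n => x (suffix σ n) = true) (fun n => y (suffix σ n) = true) 0
  rwa [← wRelEx_iff, ← wRelEx_iff, suffix_zero] at h

theorem wUntil_step (x y : (ℕ → Set P) → Bool) (σ : ℕ → Set P) :
    wUntil x y σ = true ↔ y σ = true ∨ (x σ = true ∧ wUntil x y (suffix σ 1) = true) := by
  have h := seqUntil_step (fun n => x (suffix σ n) = true) (fun n => y (suffix σ n) = true) 0
  rwa [← wUntil_iff, ← wUntil_iff, suffix_zero] at h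

/-- The robust release of two truth-valued functions of words. -/
noncomputable def relTV (X Y : (ℕ → Set P) → TV) (σ : ℕ → Set P) : TV :=
  (wRel (fun τ => (X τ).1) (fun τ => (Y τ).1) σ,
   wRelEv (fun τ => (X τ).2.1) (fun τ => (Y τ).2.1) σ,
   wRelInf (fun τ => (X τ).2.2.1) (fun τ => (Y τ).2.2.1) σ,
   wRelEx (fun τ => (X τ).2.2.2) (fun τ => (Y τ).2.2.2) σ)

/-- The robust until of two truth-valued functions of words. -/
noncomputable def untilTV (X Y : (ℕ → Set P) → TV) (σ : ℕ → Set P) : TV :=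
  (wUntil (fun τ => (X τ).1) (fun τ => (Y τ).1) σ,
   wUntil (fun τ => (X τ).2.1) (fun τ => (Y τ).2.1) σ,
   wUntil (fun τ => (X τ).2.2.1) (fun τ => (Y τ).2.2.1) σ,
   wUntil (fun τ => (X τ).2.2.2) (fun τ => (Y τ).2.2.2) σ)

theorem rV_release (a b : RFormula P) (σ : ℕ → Set P) :
    rV (.release a b) σ = relTV (rV a) (rV b) σ := rfl

theorem rV_always (a : RFormula P) (σ : ℕ → Set P) :
    rV (.always a) σ = relTV (fun _ => tbot) (rV a) σ := by
  simp [rV, relTV, wRel, wRelEv, wRelInf, wRelEx, bSupLt, tbot]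

theorem rV_until (a b : RFormula P) (σ : ℕ → Set P) :
    rV (.until a b) σ = untilTV (rV a) (rV b) σ := rfl

theorem rV_eventually (a : RFormula P) (σ : ℕ → Set P) :
    rV (.eventually a) σ = untilTV (fun _ => ttop) (rV a) σ := by
  simp [rV, untilTV, wUntil, bInfLt, ttop]

/-- The value `true` witnesses that the second component of a robust release holds because its
right-hand side holds from now on until released. -/
noncomputable def relLow (X Y : (ℕ → Set P) → TV) (σ : ℕ → Set P) : Bool :=
  wRel (fun τ => (X τ).2.1) (fun τ => (Y τ).2.1) σ

/-- The value `false` witnesses that the third component of a robust release fails because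
neither of its sides holds from now on. -/
noncomputable def relHigh (X Y : (ℕ → Set P) → TV) (σ : ℕ → Set P) : Bool :=
  wRelEx (fun τ => (X τ).2.2.1) (fun τ => (Y τ).2.2.1) σ

theorem relTV_chain {X Y : (ℕ → Set P) → TV} (hX : ∀ τ, TVMono (X τ)) (hY : ∀ τ, TVMono (Y τ))
    (σ : ℕ → Set P) :
    (relTV X Y σ).1 ≤ relLow X Y σ ∧ relLow X Y σ ≤ (relTV X Y σ).2.1 ∧
      (relTV X Y σ).2.1 ≤ (relTV X Y σ).2.2.1 ∧ (relTV X Y σ).2.2.1 ≤ relHigh X Y σ ∧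
      relHigh X Y σ ≤ (relTV X Y σ).2.2.2 := by
  simp only [Bool.le_iff_imp, TVMono] at hX hY ⊢
  simp only [relTV, relLow, relHigh, wRel, wRelEv, wRelInf, wRelEx, bInf_eq_true,
    bSup_eq_true, bSupLt_eq_true, Bool.or_eq_true]
  refine ⟨fun h j => ?_, fun h => ⟨0, fun j => by simpa using h j⟩, ?_, fun h => ?_, ?_⟩
  · rcases h j with h | ⟨l, h1, h2⟩
    · exact Or.inl ((hY _).1 h)
    · exact Or.inr ⟨l, h1, (hX _).1 h2⟩
  · rintro ⟨k, h⟩ m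
    refine ⟨k, ?_⟩
    rcases h m with h | ⟨l, h1, h2⟩
    · exact Or.inl (by rw [Nat.add_comm]; exact (hY _).2.1 h)
    · exact Or.inr ⟨l, by omega, (hX _).2.1 h2⟩
  · simpa using h 0
  · rintro ⟨j, h | ⟨l, h1, h2⟩⟩
    · exact ⟨j, Or.inl ((hY _).2.2 h)⟩
    · exact ⟨j, Or.inr ⟨l, h1, (hX _).2.2 h2⟩⟩

theorem relTV_mono {X Y : (ℕ → Set P) → TV} (hX : ∀ τ, TVMono (X τ)) (hY : ∀ τ, TVMono (Y τ))
    (σ : ℕ → Set P) : TVMono (relTV X Y σ) := by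
  obtain ⟨h1, h2, h3, h4, h5⟩ := relTV_chain hX hY σ
  exact ⟨h1.trans h2, h3, h4.trans h5⟩

theorem wUntil_mono {x y x' y' : (ℕ → Set P) → Bool} (hx : ∀ τ, x τ ≤ x' τ)
    (hy : ∀ τ, y τ ≤ y' τ) (σ : ℕ → Set P) : wUntil x y σ ≤ wUntil x' y' σ := by
  simp only [Bool.le_iff_imp] at hx hy ⊢
  simp only [wUntil, bSup_eq_true, bInfLt_eq_true, Bool.and_eq_true]
  rintro ⟨j, h1, h2⟩
  exact ⟨j, hy _ h1, fun l hl => hx _ (h2 l hl)⟩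

theorem untilTV_mono {X Y : (ℕ → Set P) → TV} (hX : ∀ τ, TVMono (X τ)) (hY : ∀ τ, TVMono (Y τ))
    (σ : ℕ → Set P) : TVMono (untilTV X Y σ) :=
  ⟨wUntil_mono (fun τ => (hX τ).1) (fun τ => (hY τ).1) σ,
    wUntil_mono (fun τ => (hX τ).2.1) (fun τ => (hY τ).2.1) σ,
    wUntil_mono (fun τ => (hX τ).2.2) (fun τ => (hY τ).2.2) σ⟩

instance : DecidablePred TVMono := fun a => by unfold TVMono; infer_instance

theorem tvMono_ttop : TVMono ttop := by decide

theorem tvMono_tbot : TVMono tbot := by decide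

theorem tvMono_tneg (a : TV) : TVMono (tneg a) := by
  unfold tneg
  split_ifs
  exacts [tvMono_tbot, tvMono_ttop]

theorem tvMono_timp {a b : TV} (hb : TVMono b) : TVMono (timp a b) := by
  unfold timp
  split_ifs
  exacts [tvMono_ttop, hb]

theorem tvMono_tmeet : ∀ {a b : TV}, TVMono a → TVMono b → TVMono (tmeet a b) := by
  unfold tmeet TVMono
  decide

theorem tvMono_tjoin : ∀ {a b : TV}, TVMono a → TVMono b → TVMono (tjoin a b) := by
  unfold tjoin TVMono
  decide

theorem tvMono_rV (ψ : RFormula P) (σ : ℕ → Set P) : TVMono (rV ψ σ) := by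
  induction ψ generalizing σ with
  | atom p =>
    simp only [rV]
    split_ifs
    exacts [tvMono_ttop, tvMono_tbot]
  | not a _ => exact tvMono_tneg _
  | and a b iha ihb => exact tvMono_tmeet (iha σ) (ihb σ)
  | or a b iha ihb => exact tvMono_tjoin (iha σ) (ihb σ)
  | imp a b _ ihb => exact tvMono_timp (ihb σ)
  | next a ih => exact ih _
  | always a ih => rw [rV_always]; exact relTV_mono (fun _ => tvMono_tbot) ih σ
  | eventually a ih => rw [rV_eventually]; exact untilTV_mono (fun _ => tvMono_ttop) ih σ
  | release a b iha ihb => exact relTV_mono iha ihb σ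
  | _ a b iha ihb => exact untilTV_mono iha ihb σ

/-! ### Encoding the witnesses into the five truth values -/

/-- The robust release together with its two witnesses, packed into one truth value. -/
def packTV (r : TV) (g d : Bool) : TV :=
  if r = (false, true, true, true) ∧ g = true then tbot
  else if r = (false, false, false, true) ∧ d = false then ttop
  else r

/-- Recovers the arguments of `packTV` from its value and the value of the right-hand side. -/
def unpackTV (c y : TV) : TV × Bool × Bool :=
  if c = tbot ∧ y.2.1 = true then ((false, true, true, true), true, true)
  else if c = ttop ∧ y.2.2.1 = false then ((false, false, false, true), false, false)
  else (c, c.1, c.2.2.2)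

theorem unpackTV_packTV {r y : TV} {g d : Bool} (h1 : r.1 ≤ g) (h2 : g ≤ r.2.1)
    (h3 : r.2.1 ≤ r.2.2.1) (h4 : r.2.2.1 ≤ d) (h5 : d ≤ r.2.2.2) (hy : TVMono y)
    (hr : r.1 ≤ y.1) (hg : g ≤ y.2.1) (hd : y.2.2.1 ≤ d) :
    unpackTV (packTV r g d) y = (r, g, d) := by
  obtain ⟨r1, r2, r3, r4⟩ := r
  obtain ⟨y1, y2, y3, y4⟩ := y
  revert r1 r2 r3 r4 g d y1 y2 y3 y4
  unfold TVMono
  decide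

noncomputable def relCode (X Y : (ℕ → Set P) → TV) (σ : ℕ → Set P) : TV :=
  packTV (relTV X Y σ) (relLow X Y σ) (relHigh X Y σ)

theorem relCode_mono {X Y : (ℕ → Set P) → TV} (hX : ∀ τ, TVMono (X τ)) (hY : ∀ τ, TVMono (Y τ))
    (σ : ℕ → Set P) : TVMono (relCode X Y σ) := by
  unfold relCode packTV
  split_ifs
  exacts [tvMono_tbot, tvMono_ttop, relTV_mono hX hY σ]

theorem unpackTV_relCode {X Y : (ℕ → Set P) → TV} (hX : ∀ τ, TVMono (X τ))
    (hY : ∀ τ, TVMono (Y τ)) (σ : ℕ → Set P) :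
    unpackTV (relCode X Y σ) (Y σ) = (relTV X Y σ, relLow X Y σ, relHigh X Y σ) := by
  obtain ⟨h1, h2, h3, h4, h5⟩ := relTV_chain hX hY σ
  refine unpackTV_packTV h1 h2 h3 h4 h5 (hY σ) ?_ ?_ ?_ <;> rw [Bool.le_iff_imp]
  · exact fun h => ((wRel_step (fun τ => (X τ).1) (fun τ => (Y τ).1) σ).1 h).1
  · exact fun h => ((wRel_step (fun τ => (X τ).2.1) (fun τ => (Y τ).2.1) σ).1 h).1
  · exact fun h =>
      (wRelEx_step (fun τ => (X τ).2.2.1) (fun τ => (Y τ).2.2.1) σ).2 (Or.inl h)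

/-- The fairness conditions for a robust release. -/
def RelFair (X Y : (ℕ → Set P) → TV) (k : Fin 4) (σ : ℕ → Set P) : Prop :=
  match k with
  | 0 => (relTV X Y σ).1 = true ∨ ¬ (Y σ).1 = true
  | 1 => (¬ (relTV X Y σ).2.1 = true ∧ ¬ (Y σ).2.1 = true) ∨
      ((relTV X Y σ).2.1 = true ∧ ((X σ).2.1 = true ∨ relLow X Y σ = true))
  | 2 => ((relTV X Y σ).2.2.1 = true ∧ ((X σ).2.2.1 = true ∨ (Y σ).2.2.1 = true)) ∨
      (¬ (relTV X Y σ).2.2.1 = true ∧ ¬ relHigh X Y σ = true)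
  | 3 => ¬ (relTV X Y σ).2.2.2 = true ∨ (X σ).2.2.2 = true ∨ (Y σ).2.2.2 = true

/-- The fairness conditions for a robust until. -/
def UntilFair (X Y : (ℕ → Set P) → TV) (k : Fin 4) (σ : ℕ → Set P) : Prop :=
  ¬ comp k (untilTV X Y σ) = true ∨ comp k (Y σ) = true

theorem relFair_suffix (X Y : (ℕ → Set P) → TV) (k : Fin 4) (σ : ℕ → Set P) (i : ℕ) :
    ∃ j, i ≤ j ∧ RelFair X Y k (suffix σ j) := by
  fin_cases k <;>
    simp only [RelFair, relTV, relLow, relHigh, wRel_iff, wRelEv_iff, wRelInf_iff, wRelEx_iff]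
  · exact seqRel_fair _ _ i
  · exact seqRelEv_fair _ _ i
  · exact seqRelInf_fair _ _ i
  · exact seqRelEx_fair _ _ i

theorem untilFair_suffix (X Y : (ℕ → Set P) → TV) (k : Fin 4) (σ : ℕ → Set P) (i : ℕ) :
    ∃ j, i ≤ j ∧ UntilFair X Y k (suffix σ j) := by
  fin_cases k <;> simp only [UntilFair, comp, untilTV, wUntil_iff] <;> exact seqUntil_fair _ _ i

theorem relTV_eq_of_fair {X Y : (ℕ → Set P) → TV} {τ : ℕ → ℕ → Set P} {σ : ℕ → Set P}
    (hX : ∀ i, X (τ i) = X (suffix σ i)) (hY : ∀ i, Y (τ i) = Y (suffix σ i))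
    (hr : ∀ i, relTV X Y (suffix (τ i) 1) = relTV X Y (τ (i + 1)))
    (hl : ∀ i, relLow X Y (suffix (τ i) 1) = relLow X Y (τ (i + 1)))
    (hh : ∀ i, relHigh X Y (suffix (τ i) 1) = relHigh X Y (τ (i + 1)))
    (hf : ∀ k i, ∃ j, i ≤ j ∧ RelFair X Y k (τ j)) (i : ℕ) :
    relTV X Y (τ i) = relTV X Y (suffix σ i) := by
  simp only [relTV, Prod.mk.injEq] at hr
  simp only [relLow] at hl
  simp only [relHigh] at hh
  simp only [relTV, Prod.mk.injEq, Bool.eq_iff_iff (b := wRel _ _ (suffix σ i)),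
    Bool.eq_iff_iff (b := wRelEv _ _ (suffix σ i)),
    Bool.eq_iff_iff (b := wRelInf _ _ (suffix σ i)),
    Bool.eq_iff_iff (b := wRelEx _ _ (suffix σ i)),
    wRel_iff, wRelEv_iff, wRelInf_iff, wRelEx_iff, ← hX, ← hY]
  refine ⟨?_, ?_, ?_, ?_⟩
  · refine seqRel_unique (x := fun i => (X (τ i)).1 = true) (y := fun i => (Y (τ i)).1 = true)
      (r := fun i => (relTV X Y (τ i)).1 = true) (fun i => ?_) (hf 0) i
    simp only [relTV]
    rw [← (hr i).1]
    exact wRel_step _ _ _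
  · refine seqRelEv_unique (x := fun i => (X (τ i)).2.1 = true)
      (y := fun i => (Y (τ i)).2.1 = true)
      (r := fun i => (relTV X Y (τ i)).2.1 = true)
      (g := fun i => relLow X Y (τ i) = true) (fun i => ?_) (fun i h => ?_) (hf 1) i
    · simp only [relTV]
      rw [← (hr i).2.1]
      exact wRelEv_step _ _ _
    · unfold relLow
      rw [← hl i]
      exact (wRel_step _ _ _).1 h
  · refine seqRelInf_unique (x := fun i => (X (τ i)).2.2.1 = true)
      (y := fun i => (Y (τ i)).2.2.1 = true)
      (r := fun i => (relTV X Y (τ i)).2.2.1 = true)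
      (d := fun i => relHigh X Y (τ i) = true) (fun i => ?_) (fun i => ?_) (hf 2) i
    · simp only [relTV]
      rw [← (hr i).2.2.1]
      exact wRelInf_step _ _ _
    · unfold relHigh
      rw [← hh i]
      exact wRelEx_step _ _ _
  · refine seqRelEx_unique (x := fun i => (X (τ i)).2.2.2 = true)
      (y := fun i => (Y (τ i)).2.2.2 = true)
      (r := fun i => (relTV X Y (τ i)).2.2.2 = true) (fun i => ?_) (hf 3) i
    simp only [relTV]
    rw [← (hr i).2.2.2]
    exact wRelEx_step _ _ _

theorem untilTV_eq_of_fair {X Y : (ℕ → Set P) → TV} {τ : ℕ → ℕ → Set P} {σ : ℕ → Set P}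
    (hX : ∀ i, X (τ i) = X (suffix σ i)) (hY : ∀ i, Y (τ i) = Y (suffix σ i))
    (hr : ∀ i, untilTV X Y (suffix (τ i) 1) = untilTV X Y (τ (i + 1)))
    (hf : ∀ k i, ∃ j, i ≤ j ∧ UntilFair X Y k (τ j)) (i : ℕ) :
    untilTV X Y (τ i) = untilTV X Y (suffix σ i) := by
  simp only [untilTV, Prod.mk.injEq] at hr
  simp only [untilTV, Prod.mk.injEq, Bool.eq_iff_iff (b := wUntil _ _ (suffix σ i)),
    wUntil_iff, ← hX, ← hY]
  refine ⟨?_, ?_, ?_, ?_⟩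
  · refine seqUntil_unique (x := fun i => (X (τ i)).1 = true)
      (y := fun i => (Y (τ i)).1 = true) (r := fun i => (untilTV X Y (τ i)).1 = true)
      (fun i => ?_) (hf 0) i
    simp only [untilTV]
    rw [← (hr i).1]
    exact wUntil_step _ _ _
  · refine seqUntil_unique (x := fun i => (X (τ i)).2.1 = true)
      (y := fun i => (Y (τ i)).2.1 = true) (r := fun i => (untilTV X Y (τ i)).2.1 = true)
      (fun i => ?_) (hf 1) i
    simp only [untilTV]
    rw [← (hr i).2.1]
    exact wUntil_step _ _ _
  · refine seqUntil_unique (x := fun i => (X (τ i)).2.2.1 = true)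
      (y := fun i => (Y (τ i)).2.2.1 = true) (r := fun i => (untilTV X Y (τ i)).2.2.1 = true)
      (fun i => ?_) (hf 2) i
    simp only [untilTV]
    rw [← (hr i).2.2.1]
    exact wUntil_step _ _ _
  · refine seqUntil_unique (x := fun i => (X (τ i)).2.2.2 = true)
      (y := fun i => (Y (τ i)).2.2.2 = true) (r := fun i => (untilTV X Y (τ i)).2.2.2 = true)
      (fun i => ?_) (hf 3) i
    simp only [untilTV]
    rw [← (hr i).2.2.2]
    exact wUntil_step _ _ _

theorem rel_eq_of_relCode_eq {X Y : (ℕ → Set P) → TV} (hX : ∀ τ, TVMono (X τ))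
    (hY : ∀ τ, TVMono (Y τ)) {σ τ : ℕ → Set P} (hc : relCode X Y σ = relCode X Y τ)
    (hy : Y σ = Y τ) :
    relTV X Y σ = relTV X Y τ ∧ relLow X Y σ = relLow X Y τ ∧ relHigh X Y σ = relHigh X Y τ := by
  have h := unpackTV_relCode hX hY σ
  rw [hc, hy, unpackTV_relCode hX hY τ] at h
  simp only [Prod.mk.injEq] at h
  exact ⟨h.1.symm, h.2.1.symm, h.2.2.symm⟩

/-! ### Codes of formulas -/

/-- The truth value stored for a formula in the state of the automaton reading a word. -/
noncomputable def code : RFormula P → (ℕ → Set P) → TV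
  | .always a => relCode (fun _ => tbot) (rV a)
  | .release a b => relCode (rV a) (rV b)
  | ψ => rV ψ

/-- The fairness conditions of a formula. -/
def Fair : RFormula P → Fin 4 → (ℕ → Set P) → Prop
  | .always a => RelFair (fun _ => tbot) (rV a)
  | .release a b => RelFair (rV a) (rV b)
  | .eventually a => UntilFair (fun _ => ttop) (rV a)
  | .until a b => UntilFair (rV a) (rV b)
  | _ => fun _ _ => True

theorem tvMono_code (ψ : RFormula P) (σ : ℕ → Set P) : TVMono (code ψ σ) := by
  cases ψ with
  | always a => exact relCode_mono (fun _ => tvMono_tbot) (tvMono_rV a) σ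
  | release a b => exact relCode_mono (tvMono_rV a) (tvMono_rV b) σ
  | _ => exact tvMono_rV _ σ

theorem fair_suffix (ψ : RFormula P) (k : Fin 4) (σ : ℕ → Set P) (i : ℕ) :
    ∃ j, i ≤ j ∧ Fair ψ k (suffix σ j) := by
  cases ψ with
  | always a => exact relFair_suffix _ _ k σ i
  | release a b => exact relFair_suffix _ _ k σ i
  | eventually a => exact untilFair_suffix _ _ k σ i
  | atom | not | and | or | imp | next => exact ⟨i, le_rfl, trivial⟩
  | _ a b => exact untilFair_suffix _ _ k σ i

variable [DecidableEq P]

theorem mem_cl_self (ψ : RFormula P) : ψ ∈ cl ψ := by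
  cases ψ <;> simp [cl]

theorem subset_insert_union_left {α : Type*} [DecidableEq α] (x : α) (s t : Finset α) :
    s ⊆ insert x (s ∪ t) :=
  Finset.subset_union_left.trans (Finset.subset_insert _ _)

theorem subset_insert_union_right {α : Type*} [DecidableEq α] (x : α) (s t : Finset α) :
    t ⊆ insert x (s ∪ t) :=
  Finset.subset_union_right.trans (Finset.subset_insert _ _)

theorem cl_subset {φ ψ : RFormula P} (h : ψ ∈ cl φ) : cl ψ ⊆ cl φ := by
  induction φ with
  | atom p =>
    obtain rfl := Finset.mem_singleton.1 h
    rfl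
  | not a ih | next a ih | always a ih | eventually a ih =>
    rcases Finset.mem_insert.1 h with rfl | h
    · rfl
    · exact (ih h).trans (Finset.subset_insert _ _)
  | and a b iha ihb | or a b iha ihb | imp a b iha ihb | release a b iha ihb
  | _ a b iha ihb =>
    rcases Finset.mem_insert.1 h with rfl | h
    · rfl
    · rcases Finset.mem_union.1 h with h | h
      · exact (iha h).trans (subset_insert_union_left _ _ _)
      · exact (ihb h).trans (subset_insert_union_right _ _ _)

/-- The words have the same codes on all subformulas of `ψ`. -/
def SameCode (ψ : RFormula P) (σ τ : ℕ → Set P) : Prop := ∀ χ ∈ cl ψ, code χ σ = code χ τ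

theorem SameCode.sub {ψ χ : RFormula P} {σ τ : ℕ → Set P} (h : SameCode ψ σ τ)
    (hs : cl χ ⊆ cl ψ) : SameCode χ σ τ := fun _ h' => h _ (hs h')

theorem SameCode.rV_eq {ψ : RFormula P} {σ τ : ℕ → Set P} (h : SameCode ψ σ τ) :
    rV ψ σ = rV ψ τ := by
  induction ψ with
  | always a ih =>
    rw [rV_always, rV_always]
    exact (rel_eq_of_relCode_eq (fun _ => tvMono_tbot) (tvMono_rV a) (h _ (mem_cl_self _))
      (ih (h.sub (Finset.subset_insert _ _)))).1
  | release a b _ ihb =>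
    exact (rel_eq_of_relCode_eq (tvMono_rV a) (tvMono_rV b) (h _ (mem_cl_self _))
      (ihb (h.sub (subset_insert_union_right _ _ _)))).1
  | _ => exact h _ (mem_cl_self _)

theorem SameCode.fair_iff {ψ : RFormula P} {σ τ : ℕ → Set P} (h : SameCode ψ σ τ) (k : Fin 4) :
    Fair ψ k σ ↔ Fair ψ k τ := by
  have hv := h.rV_eq
  cases ψ with
  | always a =>
    have ha := (h.sub (χ := a) (Finset.subset_insert _ _)).rV_eq
    obtain ⟨h1, h2, h3⟩ := rel_eq_of_relCode_eq (fun _ => tvMono_tbot) (tvMono_rV a)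
      (h _ (mem_cl_self _)) ha
    simp only [Fair, RelFair, ha, h1, h2, h3]
  | release a b =>
    have ha := (h.sub (χ := a) (subset_insert_union_left _ _ _)).rV_eq
    have hb := (h.sub (χ := b) (subset_insert_union_right _ _ _)).rV_eq
    obtain ⟨h1, h2, h3⟩ := rel_eq_of_relCode_eq (tvMono_rV a) (tvMono_rV b)
      (h _ (mem_cl_self _)) hb
    simp only [Fair, RelFair, ha, hb, h1, h2, h3]
  | eventually a =>
    have ha := (h.sub (χ := a) (Finset.subset_insert _ _)).rV_eq
    rw [rV_eventually, rV_eventually] at hv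
    simp only [Fair, UntilFair, ha, hv]
  | atom | not | and | or | imp | next => exact Iff.rfl
  | _ a b =>
    have hb := (h.sub (χ := b) (subset_insert_union_right _ _ _)).rV_eq
    rw [rV_until, rV_until] at hv
    simp only [Fair, UntilFair, hb, hv]

theorem rV_eq_of_fair {φ : RFormula P} {τ : ℕ → ℕ → Set P} {σ : ℕ → Set P}
    (h0 : ∀ i, τ i 0 = σ i) (hs : ∀ i, SameCode φ (suffix (τ i) 1) (τ (i + 1)))
    (hf : ∀ ψ ∈ cl φ, ∀ k i, ∃ j, i ≤ j ∧ Fair ψ k (τ j)) (i : ℕ) :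
    rV φ (τ i) = rV φ (suffix σ i) := by
  induction φ generalizing i with
  | atom p =>
    have h : τ i 0 = suffix σ i 0 := h0 i
    simp only [rV]
    rw [h]
  | not a ih =>
    have ha := ih (fun i => (hs i).sub (Finset.subset_insert _ _))
      (fun ψ hψ => hf ψ (Finset.subset_insert _ _ hψ)) i
    simp only [rV, ha]
  | next a ih =>
    have ha := ih (fun i => (hs i).sub (Finset.subset_insert _ _))
      (fun ψ hψ => hf ψ (Finset.subset_insert _ _ hψ)) (i + 1)
    simp only [rV, suffix_suffix]
    rw [← ha]
    exact ((hs i).sub (Finset.subset_insert _ _)).rV_eq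
  | always a ih =>
    have ha := ih (fun i => (hs i).sub (Finset.subset_insert _ _))
      (fun ψ hψ => hf ψ (Finset.subset_insert _ _ hψ))
    have hr := fun i => rel_eq_of_relCode_eq (fun _ => tvMono_tbot) (tvMono_rV a)
      (hs i _ (mem_cl_self _)) ((hs i).sub (Finset.subset_insert _ _)).rV_eq
    rw [rV_always, rV_always]
    exact relTV_eq_of_fair (X := fun _ => tbot) (fun _ => rfl) ha (fun i => (hr i).1)
      (fun i => (hr i).2.1) (fun i => (hr i).2.2) (hf _ (mem_cl_self _)) i
  | eventually a ih =>
    have ha := ih (fun i => (hs i).sub (Finset.subset_insert _ _))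
      (fun ψ hψ => hf ψ (Finset.subset_insert _ _ hψ))
    have hr := fun i => (hs i).rV_eq
    simp only [rV_eventually] at hr ⊢
    exact untilTV_eq_of_fair (X := fun _ => ttop) (fun _ => rfl) ha hr (hf _ (mem_cl_self _)) i
  | and a b iha ihb | or a b iha ihb | imp a b iha ihb =>
    have ha := iha (fun i => (hs i).sub (subset_insert_union_left _ _ _))
      (fun ψ hψ => hf ψ (subset_insert_union_left _ _ _ hψ)) i
    have hb := ihb (fun i => (hs i).sub (subset_insert_union_right _ _ _))
      (fun ψ hψ => hf ψ (subset_insert_union_right _ _ _ hψ)) i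
    simp only [rV, ha, hb]
  | release a b iha ihb =>
    have ha := iha (fun i => (hs i).sub (subset_insert_union_left _ _ _))
      (fun ψ hψ => hf ψ (subset_insert_union_left _ _ _ hψ))
    have hb := ihb (fun i => (hs i).sub (subset_insert_union_right _ _ _))
      (fun ψ hψ => hf ψ (subset_insert_union_right _ _ _ hψ))
    have hr := fun i => rel_eq_of_relCode_eq (tvMono_rV a) (tvMono_rV b)
      (hs i _ (mem_cl_self _)) ((hs i).sub (subset_insert_union_right _ _ _)).rV_eq
    exact relTV_eq_of_fair ha hb (fun i => (hr i).1) (fun i => (hr i).2.1)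
      (fun i => (hr i).2.2) (hf _ (mem_cl_self _)) i
  | _ a b iha ihb =>
    have ha := iha (fun i => (hs i).sub (subset_insert_union_left _ _ _))
      (fun ψ hψ => hf ψ (subset_insert_union_left _ _ _ hψ))
    have hb := ihb (fun i => (hs i).sub (subset_insert_union_right _ _ _))
      (fun ψ hψ => hf ψ (subset_insert_union_right _ _ _ hψ))
    exact untilTV_eq_of_fair ha hb (fun i => (hs i).rV_eq) (hf _ (mem_cl_self _)) i

/-! ### The automaton -/

/-- The codes of all subformulas of `φ` on a word. -/
noncomputable def codes (φ : RFormula P) (σ : ℕ → Set P) : cl φ → {b : TV // TVMono b} :=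
  fun ψ => ⟨code ψ.1 σ, tvMono_code ψ.1 σ⟩

theorem codes_eq_iff {φ : RFormula P} {σ τ : ℕ → Set P} :
    codes φ σ = codes φ τ ↔ SameCode φ σ τ := by
  simp [codes, SameCode, funext_iff]

/-- The states of the automaton for `φ`: the realizable codes and one initial state for each
truth value. -/
abbrev AutState (φ : RFormula P) : Type := Set.range (codes φ) ⊕ {b : TV // TVMono b}

/-- The words that a state stands for. -/
def AutState.Rep {φ : RFormula P} : AutState φ → (ℕ → Set P) → Prop
  | .inl f, σ => codes φ σ = f
  | .inr b, σ => rV φ σ = b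

/-- The state reached when a given word is left to be read. -/
noncomputable def AutState.ofWord (φ : RFormula P) (σ : ℕ → Set P) : AutState φ :=
  .inl ⟨codes φ σ, σ, rfl⟩

open scoped Classical in
/-- The automaton for `φ`. -/
noncomputable def aut (φ : RFormula P) : GBA (Set P) (AutState φ) where
  Δ s a s' := ∃ τ, s.Rep τ ∧ τ 0 = a ∧ s' = AutState.ofWord φ (suffix τ 1)
  Acc := (cl φ ×ˢ Finset.univ).image fun p : RFormula P × Fin 4 =>
    {s | ∃ τ, s = AutState.ofWord φ τ ∧ Fair p.1 p.2 τ}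

theorem card_aut_acc (φ : RFormula P) : (aut φ).Acc.card ≤ 4 * (cl φ).card := by
  refine Finset.card_image_le.trans ?_
  simp [Finset.card_product, Nat.mul_comm]

theorem acceptsFrom_aut (φ : RFormula P) (b : {b : TV // TVMono b}) (σ : ℕ → Set P) :
    AcceptsFrom (aut φ) (.inr b) σ ↔ rV φ σ = b.val := by
  constructor
  · rintro ⟨ρ, hρ, hΔ, hacc⟩
    choose τ hrep h0 hnext using hΔ
    have hs : ∀ i, SameCode φ (suffix (τ i) 1) (τ (i + 1)) := fun i => by
      have h := hrep (i + 1)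
      rw [hnext i] at h
      exact codes_eq_iff.1 h.symm
    have hf : ∀ ψ ∈ cl φ, ∀ k i, ∃ j, i ≤ j ∧ Fair ψ k (τ j) := by
      intro ψ hψ k i
      obtain ⟨j, hj, τ', h1, h2⟩ := hacc _
        (Finset.mem_image_of_mem _ (Finset.mk_mem_product hψ (Finset.mem_univ k))) i
      refine ⟨j, hj, ?_⟩
      have h := hrep j
      rw [h1] at h
      exact ((codes_eq_iff.1 h).sub (cl_subset hψ) |>.fair_iff k).2 h2
    have h := rV_eq_of_fair h0 hs hf 0
    have hb := hrep 0
    rw [hρ] at hb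
    rw [suffix_zero] at h
    exact h.symm.trans hb
  · intro h
    refine ⟨fun i => if i = 0 then .inr b else .ofWord φ (suffix σ i), rfl, fun i => ?_, ?_⟩
    · refine ⟨suffix σ i, ?_, rfl, by simp [suffix_suffix]⟩
      by_cases hi : i = 0
      · subst hi
        simpa [AutState.Rep, suffix_zero] using h
      · simp [hi, AutState.Rep, AutState.ofWord]
    · intro F hF i
      obtain ⟨⟨ψ, k⟩, -, rfl⟩ := Finset.mem_image.1 hF
      obtain ⟨j, hj, hfair⟩ := fair_suffix ψ k σ (i + 1)
      exact ⟨j, by omega, suffix σ j, by simp [show j ≠ 0 by omega], hfair⟩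

theorem exists_atom_mem_cl (φ : RFormula P) : ∃ p, RFormula.atom p ∈ cl φ := by
  induction φ with
  | atom p => exact ⟨p, mem_cl_self _⟩
  | not a ih | next a ih | always a ih | eventually a ih =>
    obtain ⟨p, hp⟩ := ih
    exact ⟨p, Finset.mem_insert_of_mem hp⟩
  | and a b ih _ | or a b ih _ | imp a b ih _ | release a b ih _ | _ a b ih _ =>
    obtain ⟨p, hp⟩ := ih
    exact ⟨p, subset_insert_union_left _ _ _ hp⟩

theorem card_tvMono : Fintype.card {b : TV // TVMono b} = 5 := by
  decide

theorem card_autState (φ : RFormula P) : Nat.card (AutState φ) ≤ 5 ^ (cl φ).card + 4 := by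
  have hlt : Nat.card (Set.range (codes φ)) < 5 ^ (cl φ).card := by
    obtain ⟨p, hp⟩ := exists_atom_mem_cl φ
    have hne : (fun _ => ⟨(false, false, false, true), by decide⟩) ∉ Set.range (codes φ) := by
      rintro ⟨σ, h⟩
      have h := congrArg Subtype.val (congrFun h ⟨.atom p, hp⟩)
      simp only [codes, code, rV] at h
      split_ifs at h <;> exact absurd h (by decide)
    have h := Set.ncard_lt_ncard (Set.ssubset_univ_iff.2 (Set.ne_univ_iff_exists_notMem _ |>.2
      ⟨_, hne⟩)) (Set.toFinite _)
    rw [Set.ncard_univ, Nat.card_eq_fintype_card, Fintype.card_fun, card_tvMono,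
      Fintype.card_coe] at h
    exact h
  rw [Nat.card_sum, Nat.card_eq_fintype_card (α := {b : TV // TVMono b}), card_tvMono]
  omega

end Words

/-- The automaton obtained by renaming the states. -/
noncomputable def GBA.map {S Q Q' : Type} (A : GBA S Q) (e : Q ≃ Q') : GBA S Q' where
  Δ s a s' := A.Δ (e.symm s) a (e.symm s')
  Acc := A.Acc.map (Equiv.Set.congr e).toEmbedding

theorem acceptsFrom_map {S Q Q' : Type} (A : GBA S Q) (e : Q ≃ Q') (q : Q) (σ : ℕ → S) :
    AcceptsFrom (A.map e) (e q) σ ↔ AcceptsFrom A q σ := by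
  constructor
  · rintro ⟨ρ, h0, hΔ, hacc⟩
    refine ⟨fun i => e.symm (ρ i), by simp [h0], hΔ, fun F hF i => ?_⟩
    obtain ⟨j, hj, x, hx, hxj⟩ := hacc (e '' F) (Finset.mem_map_of_mem _ hF) i
    exact ⟨j, hj, by simpa [← hxj] using hx⟩
  · rintro ⟨ρ, h0, hΔ, hacc⟩
    refine ⟨fun i => e (ρ i), by simp [h0], fun i => by simpa [GBA.map] using hΔ i, ?_⟩
    intro F hF i
    obtain ⟨G, hG, rfl⟩ := Finset.mem_map.1 hF
    obtain ⟨j, hj, h⟩ := hacc G hG i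
    exact ⟨j, hj, Set.mem_image_of_mem e h⟩

/-- For every full rLTL formula `φ` over a nonempty finite set `𝒫` of atomic
propositions there is a generalized Büchi automaton over `Σ = 2^𝒫`, with at most
`5^|cl(φ)| + 4` states and at most `4·|cl(φ)|` acceptance sets, together with a family of
states `(q_b)_{b ∈ B₄}`, such that for every `b ∈ B₄` and every `σ ∈ Σ^ω` the automaton has
an accepting run on `σ` starting in `q_b` if and only if `V(σ,φ) = b`. -/
theorem exists_GBA_for_full_rLTL {P : Type} [Fintype P] [Nonempty P] [DecidableEq P]
    (φ : RFormula P) :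
    ∃ (n : ℕ) (A : GBA (Set P) (Fin n)) (q : {b : TV // TVMono b} → Fin n),
      0 < n
      ∧ n ≤ 5 ^ (cl φ).card + 4
      ∧ A.Acc.card ≤ 4 * (cl φ).card
      ∧ ∀ (b : {b : TV // TVMono b}) (σ : ℕ → Set P),
          AcceptsFrom A (q b) σ ↔ rV φ σ = b.val := by
  have : Nonempty (AutState φ) := ⟨.inr ⟨tbot, tvMono_tbot⟩⟩
  let e := Finite.equivFin (AutState φ)
  refine ⟨Nat.card (AutState φ), (aut φ).map e, fun b => e (.inr b), Nat.card_pos,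
    card_autState φ, ?_, fun b σ => ?_⟩
  · rw [GBA.map, Finset.card_map]
    exact card_aut_acc φ
  · rw [acceptsFrom_map, acceptsFrom_aut]
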